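/- arXiv:2509.08251 — 3 statements merged into one kernel-verified Lean document; each statement's English description precedes it below -/
import Mathlib

section
/- Let a > 5 + 2√5, set r = 1 + √(1+a), and let f_IV : ℝ⁴ → ℝ⁴ be given by f_IV(x,y,z,w) = (a − x² − w, a − y² − x, a − z² − y, z). Let R = [−r,r]⁴ and for v ∈ [−r,r] let d(v) = [−r,r]³ × {v}. Then for every v ∈ [−r,r] there exist eight continuous functions ψ_1, …, ψ_8 : [−r,r]³ → [−r,r] whose graphs G_i = {(x, y, z, ψ_i(x,y,z)) : (x,y,z) ∈ [−r,r]³} are pairwise disjoint and satisfy f_IV(d(v)) ∩ R = G_1 ∪ … ∪ G_8. -/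
/-- The four-dimensional Hénon-type map `f_IV`. -/
def fIV (a₀ a₁ a₂ : ℝ) : ℝ × ℝ × ℝ × ℝ → ℝ × ℝ × ℝ × ℝ :=
  fun p =>
    (a₀ - p.1 ^ 2 - p.2.2.2,
     a₁ - p.2.1 ^ 2 - p.1,
     a₂ - p.2.2.1 ^ 2 - p.2.1,
     p.2.2.1)

/-!
The equation `fIV a₀ a₁ a₂ (x, y, z, v) = (X, Y, Z, W)` says that `W = z` and
`x ^ 2 = a₀ - X - v`, `y ^ 2 = a₁ - Y - x`, `z ^ 2 = a₂ - Z - y`. When `2 * r < aᵢ ≤ r ^ 2 - 2 * r`,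
each right-hand side lies in `(0, r ^ 2]` as long as the coordinates stay in `[-r, r]`, so each
equation has exactly two solutions, distinct and again in `[-r, r]`. Solving for `x`, `y`, `z` in
turn, `W` is a continuous function of `(X, Y, Z)` for each of the eight choices of signs. The radius
`r = 1 + √(1 + a)` is the positive solution of `r ^ 2 - 2 * r = a`, and then `2 * r < a` amounts to
`8 < a`.
-/

section SignedSqrt

/-- The square root of `t` with sign `s`: the two inverse branches of `x ↦ x ^ 2` on `0 ≤ t`. For
`t < 0` both take the junk value `0`. -/
noncomputable def signedSqrt (s : ℤˣ) (t : ℝ) : ℝ := (s : ℤ) * √t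

@[fun_prop]
lemma continuous_signedSqrt (s : ℤˣ) : Continuous (signedSqrt s) :=
  continuous_const.mul Real.continuous_sqrt

lemma abs_signedSqrt (s : ℤˣ) (t : ℝ) : |signedSqrt s t| = √t := by
  rcases Int.units_eq_one_or s with rfl | rfl <;> simp [signedSqrt]

lemma signedSqrt_sq (s : ℤˣ) {t : ℝ} (ht : 0 ≤ t) : signedSqrt s t ^ 2 = t := by
  rw [← sq_abs, abs_signedSqrt, Real.sq_sqrt ht]

lemma exists_signedSqrt_sq_eq (x : ℝ) : ∃ s, signedSqrt s (x ^ 2) = x := by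
  rcases abs_choice x with hx | hx
  · exact ⟨1, by simp [signedSqrt, Real.sqrt_sq_eq_abs, hx]⟩
  · exact ⟨-1, by simp [signedSqrt, Real.sqrt_sq_eq_abs, hx]⟩

lemma signedSqrt_mem_Icc (s : ℤˣ) {r t : ℝ} (hr : 0 ≤ r) (ht : t ≤ r ^ 2) :
    signedSqrt s t ∈ Set.Icc (-r) r := by
  rw [Set.mem_Icc, ← abs_le, abs_signedSqrt]
  exact Real.sqrt_le_iff.2 ⟨hr, ht⟩

lemma signedSqrt_inj {s s' : ℤˣ} {t t' : ℝ} (ht : 0 < t) (ht' : 0 < t') :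
    signedSqrt s t = signedSqrt s' t' ↔ s = s' ∧ t = t' := by
  refine ⟨fun h => ?_, fun ⟨hs, htt'⟩ => hs ▸ htt' ▸ rfl⟩
  obtain rfl : t = t' := by rw [← signedSqrt_sq s ht.le, h, signedSqrt_sq s' ht'.le]
  have hs : ((s : ℤ) : ℝ) = (s' : ℤ) := mul_right_cancel₀ (Real.sqrt_pos.2 ht).ne' h
  exact ⟨Units.ext (Int.cast_injective hs), rfl⟩

end SignedSqrt

section HenonBranch

variable {a r u w : ℝ}

/-- The two solutions `x` of `a - x ^ 2 - w = u`, which is the equation relating a coordinate of a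
point to a coordinate of its image under a Hénon-type map. -/
noncomputable def henonBranch (a : ℝ) (s : ℤˣ) (u w : ℝ) : ℝ := signedSqrt s (a - u - w)

lemma exists_henonBranch_eq (a x w : ℝ) : ∃ s, henonBranch a s (a - x ^ 2 - w) w = x := by
  obtain ⟨s, hs⟩ := exists_signedSqrt_sq_eq x
  exact ⟨s, by rw [henonBranch, show a - (a - x ^ 2 - w) - w = x ^ 2 by ring, hs]⟩

lemma henonBranch_mem_Icc (s : ℤˣ) (ha : a ≤ r ^ 2 - 2 * r) (hu : u ∈ Set.Icc (-r) r)
    (hw : w ∈ Set.Icc (-r) r) : henonBranch a s u w ∈ Set.Icc (-r) r :=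
  signedSqrt_mem_Icc s (by linarith [hu.1, hu.2]) (by linarith [hu.1, hw.1])

lemma sub_henonBranch_sq_sub (s : ℤˣ) (ha : 2 * r ≤ a) (hu : u ∈ Set.Icc (-r) r)
    (hw : w ∈ Set.Icc (-r) r) : a - henonBranch a s u w ^ 2 - w = u := by
  rw [henonBranch, signedSqrt_sq s (by linarith [hu.2, hw.2])]
  ring

lemma henonBranch_inj {s s' : ℤˣ} {w' : ℝ} (ha : 2 * r < a) (hu : u ∈ Set.Icc (-r) r)
    (hw : w ∈ Set.Icc (-r) r) (hw' : w' ∈ Set.Icc (-r) r) :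
    henonBranch a s u w = henonBranch a s' u w' ↔ s = s' ∧ w = w' := by
  rw [henonBranch, henonBranch,
    signedSqrt_inj (by linarith [hu.2, hw.2]) (by linarith [hu.2, hw'.2]), sub_right_inj]

end HenonBranch

section HorizontalSlice

/-- The graph of `ψ` over `D` in `ℝ⁴`, with the coordinates `(x, y, z)` horizontal and `w`
vertical. -/
def horizontalSlice (D : Set (ℝ × ℝ × ℝ)) (ψ : ℝ × ℝ × ℝ → ℝ) : Set (ℝ × ℝ × ℝ × ℝ) :=
  {q | ∃ p ∈ D, q = (p.1, p.2.1, p.2.2, ψ p)}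

variable {D : Set (ℝ × ℝ × ℝ)} {ψ φ : ℝ × ℝ × ℝ → ℝ}

lemma mk_mem_horizontalSlice {x y z w : ℝ} :
    (x, y, z, w) ∈ horizontalSlice D ψ ↔ (x, y, z) ∈ D ∧ w = ψ (x, y, z) := by
  constructor
  · rintro ⟨p, hp, h⟩
    cases h
    exact ⟨hp, rfl⟩
  · rintro ⟨hp, rfl⟩
    exact ⟨_, hp, rfl⟩

lemma disjoint_horizontalSlice (h : ∀ p ∈ D, ψ p ≠ φ p) :
    Disjoint (horizontalSlice D ψ) (horizontalSlice D φ) := by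
  rw [Set.disjoint_left]
  rintro ⟨x, y, z, w⟩ hψ hφ
  rw [mk_mem_horizontalSlice] at hψ hφ
  exact h _ hψ.1 (hψ.2.symm.trans hφ.2)

end HorizontalSlice

section SliceFunction

open Set

variable {a₀ a₁ a₂ r v : ℝ}

/-- The function whose graph is the part of `fIV a₀ a₁ a₂ (d(v))` on which the first three
coordinates of the preimage are the Hénon branches of signs `s.1`, `s.2.1` and `s.2.2`. -/
noncomputable def sliceFun (a₀ a₁ a₂ v : ℝ) (s : ℤˣ × ℤˣ × ℤˣ) (p : ℝ × ℝ × ℝ) : ℝ :=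
  henonBranch a₂ s.2.2 p.2.2 (henonBranch a₁ s.2.1 p.2.1 (henonBranch a₀ s.1 p.1 v))

lemma continuous_sliceFun (a₀ a₁ a₂ v : ℝ) (s : ℤˣ × ℤˣ × ℤˣ) :
    Continuous (sliceFun a₀ a₁ a₂ v s) := by
  unfold sliceFun henonBranch
  fun_prop

lemma mapsTo_sliceFun (h₀ : a₀ ≤ r ^ 2 - 2 * r) (h₁ : a₁ ≤ r ^ 2 - 2 * r)
    (h₂ : a₂ ≤ r ^ 2 - 2 * r) (hv : v ∈ Icc (-r) r) (s : ℤˣ × ℤˣ × ℤˣ) :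
    MapsTo (sliceFun a₀ a₁ a₂ v s) (Icc (-r) r ×ˢ Icc (-r) r ×ˢ Icc (-r) r) (Icc (-r) r) :=
  fun _ ⟨hX, hY, hZ⟩ =>
    henonBranch_mem_Icc _ h₂ hZ (henonBranch_mem_Icc _ h₁ hY (henonBranch_mem_Icc _ h₀ hX hv))

lemma sliceFun_injective (h₀ : a₀ ∈ Ioc (2 * r) (r ^ 2 - 2 * r))
    (h₁ : a₁ ∈ Ioc (2 * r) (r ^ 2 - 2 * r)) (h₂ : 2 * r < a₂) (hv : v ∈ Icc (-r) r)
    {p : ℝ × ℝ × ℝ} (hp : p ∈ Icc (-r) r ×ˢ Icc (-r) r ×ˢ Icc (-r) r) :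
    Function.Injective fun s => sliceFun a₀ a₁ a₂ v s p := by
  rintro ⟨s₀, s₁, s₂⟩ ⟨t₀, t₁, t₂⟩ h
  obtain ⟨hX, hY, hZ⟩ := hp
  have hx (s : ℤˣ) := henonBranch_mem_Icc s h₀.2 hX hv
  have hy (s s' : ℤˣ) := henonBranch_mem_Icc s h₁.2 hY (hx s')
  obtain ⟨rfl, hxy⟩ := (henonBranch_inj h₂ hZ (hy s₁ s₀) (hy t₁ t₀)).1 h
  obtain ⟨rfl, hxv⟩ := (henonBranch_inj h₁.1 hY (hx s₀) (hx t₀)).1 hxy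
  obtain ⟨rfl, -⟩ := (henonBranch_inj h₀.1 hX hv hv).1 hxv
  rfl

lemma exists_sliceFun_eq (a₀ a₁ a₂ x y z v : ℝ) :
    ∃ s, sliceFun a₀ a₁ a₂ v s (a₀ - x ^ 2 - v, a₁ - y ^ 2 - x, a₂ - z ^ 2 - y) = z := by
  obtain ⟨s₀, hx⟩ := exists_henonBranch_eq a₀ x v
  obtain ⟨s₁, hy⟩ := exists_henonBranch_eq a₁ y x
  obtain ⟨s₂, hz⟩ := exists_henonBranch_eq a₂ z y
  exact ⟨(s₀, s₁, s₂), by simp only [sliceFun, hx, hy, hz]⟩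

lemma mk_sliceFun_mem_image_fIV (h₀ : a₀ ∈ Icc (2 * r) (r ^ 2 - 2 * r))
    (h₁ : a₁ ∈ Icc (2 * r) (r ^ 2 - 2 * r)) (h₂ : a₂ ∈ Icc (2 * r) (r ^ 2 - 2 * r))
    (hv : v ∈ Icc (-r) r) (s : ℤˣ × ℤˣ × ℤˣ) {X Y Z : ℝ} (hX : X ∈ Icc (-r) r)
    (hY : Y ∈ Icc (-r) r) (hZ : Z ∈ Icc (-r) r) :
    (X, Y, Z, sliceFun a₀ a₁ a₂ v s (X, Y, Z)) ∈
      fIV a₀ a₁ a₂ '' (Icc (-r) r ×ˢ Icc (-r) r ×ˢ Icc (-r) r ×ˢ {v}) := by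
  have hx := henonBranch_mem_Icc s.1 h₀.2 hX hv
  have hy := henonBranch_mem_Icc s.2.1 h₁.2 hY hx
  have hz := henonBranch_mem_Icc s.2.2 h₂.2 hZ hy
  refine ⟨(_, _, _, v), ⟨hx, hy, hz, rfl⟩, ?_⟩
  exact Prod.ext (sub_henonBranch_sq_sub _ h₀.1 hX hv) <|
    Prod.ext (sub_henonBranch_sq_sub _ h₁.1 hY hx) <|
    Prod.ext (sub_henonBranch_sq_sub _ h₂.1 hZ hy) rfl

lemma image_fIV_inter_eq_iUnion_horizontalSlice (h₀ : a₀ ∈ Icc (2 * r) (r ^ 2 - 2 * r))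
    (h₁ : a₁ ∈ Icc (2 * r) (r ^ 2 - 2 * r)) (h₂ : a₂ ∈ Icc (2 * r) (r ^ 2 - 2 * r))
    (hv : v ∈ Icc (-r) r) :
    fIV a₀ a₁ a₂ '' (Icc (-r) r ×ˢ Icc (-r) r ×ˢ Icc (-r) r ×ˢ {v}) ∩
        (Icc (-r) r ×ˢ Icc (-r) r ×ˢ Icc (-r) r ×ˢ Icc (-r) r) =
      ⋃ s, horizontalSlice (Icc (-r) r ×ˢ Icc (-r) r ×ˢ Icc (-r) r) (sliceFun a₀ a₁ a₂ v s) := by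
  apply Subset.antisymm
  · rintro _ ⟨⟨⟨x, y, z, _⟩, ⟨-, -, -, rfl⟩, rfl⟩, hX, hY, hZ, -⟩
    obtain ⟨s, hs⟩ := exists_sliceFun_eq a₀ a₁ a₂ x y z _
    exact mem_iUnion.2 ⟨s, mk_mem_horizontalSlice.2 ⟨⟨hX, hY, hZ⟩, hs.symm⟩⟩
  · refine iUnion_subset fun s => ?_
    rintro _ ⟨p, ⟨hX, hY, hZ⟩, rfl⟩
    exact ⟨mk_sliceFun_mem_image_fIV h₀ h₁ h₂ hv s hX hY hZ,
      hX, hY, hZ, mapsTo_sliceFun h₀.2 h₁.2 h₂.2 hv s ⟨hX, hY, hZ⟩⟩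

theorem stmt_3_general (h₀ : a₀ ∈ Ioc (2 * r) (r ^ 2 - 2 * r))
    (h₁ : a₁ ∈ Ioc (2 * r) (r ^ 2 - 2 * r)) (h₂ : a₂ ∈ Ioc (2 * r) (r ^ 2 - 2 * r))
    (hv : v ∈ Icc (-r) r) :
    ∃ ψ : Fin 8 → ℝ × ℝ × ℝ → ℝ,
      (∀ i, ContinuousOn (ψ i) (Icc (-r) r ×ˢ Icc (-r) r ×ˢ Icc (-r) r)) ∧
      (∀ i, MapsTo (ψ i) (Icc (-r) r ×ˢ Icc (-r) r ×ˢ Icc (-r) r) (Icc (-r) r)) ∧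
      (∀ i j, i ≠ j →
        Disjoint (horizontalSlice (Icc (-r) r ×ˢ Icc (-r) r ×ˢ Icc (-r) r) (ψ i))
          (horizontalSlice (Icc (-r) r ×ˢ Icc (-r) r ×ˢ Icc (-r) r) (ψ j))) ∧
      fIV a₀ a₁ a₂ '' (Icc (-r) r ×ˢ Icc (-r) r ×ˢ Icc (-r) r ×ˢ {v}) ∩
          (Icc (-r) r ×ˢ Icc (-r) r ×ˢ Icc (-r) r ×ˢ Icc (-r) r) =
        ⋃ i, horizontalSlice (Icc (-r) r ×ˢ Icc (-r) r ×ˢ Icc (-r) r) (ψ i) := by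
  let signs : Fin 8 ≃ ℤˣ × ℤˣ × ℤˣ := (Fintype.equivFinOfCardEq (by simp)).symm
  refine ⟨fun i => sliceFun a₀ a₁ a₂ v (signs i),
    fun i => (continuous_sliceFun a₀ a₁ a₂ v _).continuousOn,
    fun i => mapsTo_sliceFun h₀.2 h₁.2 h₂.2 hv _,
    fun i j hij => disjoint_horizontalSlice fun p hp =>
      (sliceFun_injective h₀ h₁ h₂.1 hv hp).ne (signs.injective.ne hij), ?_⟩
  rw [image_fIV_inter_eq_iUnion_horizontalSlice (Ioc_subset_Icc_self h₀) (Ioc_subset_Icc_self h₁)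
    (Ioc_subset_Icc_self h₂) hv]
  exact (signs.surjective.iUnion_comp _).symm

end SliceFunction

lemma mem_Ioc_of_eight_lt {a r : ℝ} (ha : 8 < a) (hr : r = 1 + √(1 + a)) :
    a ∈ Set.Ioc (2 * r) (r ^ 2 - 2 * r) := by
  subst hr
  have hsq : √(1 + a) ^ 2 = 1 + a := Real.sq_sqrt (by linarith)
  have hlt : 3 < √(1 + a) := Real.lt_sqrt_of_sq_lt (by linarith)
  constructor <;> nlinarith

lemma eight_lt_five_add_two_mul_sqrt_five : (8 : ℝ) < 5 + 2 * √5 := by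
  linarith [show (2 : ℝ) < √5 from Real.lt_sqrt_of_sq_lt (by norm_num)]

/-- for every horizontal disk `d(v)` of the hypercube `R = [-r,r]⁴`,
the intersection `f_IV(d(v)) ∩ R` consists of eight disjoint horizontal slices. -/
theorem stmt_3 (a : ℝ) (ha : a > 5 + 2 * Real.sqrt 5)
    (r : ℝ) (hr : r = 1 + Real.sqrt (1 + a)) :
    ∀ v ∈ Set.Icc (-r) r,
      ∃ ψ : Fin 8 → ℝ × ℝ × ℝ → ℝ,
        (∀ i, ContinuousOn (ψ i)
          (Set.Icc (-r) r ×ˢ Set.Icc (-r) r ×ˢ Set.Icc (-r) r)) ∧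
        (∀ i, ∀ p ∈ Set.Icc (-r) r ×ˢ Set.Icc (-r) r ×ˢ Set.Icc (-r) r,
          ψ i p ∈ Set.Icc (-r) r) ∧
        (∀ i j : Fin 8, i ≠ j →
          Disjoint
            {q : ℝ × ℝ × ℝ × ℝ |
              ∃ p ∈ Set.Icc (-r) r ×ˢ Set.Icc (-r) r ×ˢ Set.Icc (-r) r,
                q = (p.1, p.2.1, p.2.2, ψ i p)}
            {q : ℝ × ℝ × ℝ × ℝ |
              ∃ p ∈ Set.Icc (-r) r ×ˢ Set.Icc (-r) r ×ˢ Set.Icc (-r) r,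
                q = (p.1, p.2.1, p.2.2, ψ j p)}) ∧
        (fIV a a a ''
            (Set.Icc (-r) r ×ˢ Set.Icc (-r) r ×ˢ Set.Icc (-r) r ×ˢ
              ({v} : Set ℝ))) ∩
            (Set.Icc (-r) r ×ˢ Set.Icc (-r) r ×ˢ Set.Icc (-r) r ×ˢ Set.Icc (-r) r) =
          ⋃ i : Fin 8,
            {q : ℝ × ℝ × ℝ × ℝ |
              ∃ p ∈ Set.Icc (-r) r ×ˢ Set.Icc (-r) r ×ˢ Set.Icc (-r) r,
                q = (p.1, p.2.1, p.2.2, ψ i p)} := by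
  have h := mem_Ioc_of_eight_lt (eight_lt_five_add_two_mul_sqrt_five.trans ha) hr
  exact fun _ => stmt_3_general h h h
end

section
/- Let a > 5 + 2√5 and r = 1 + √(1+a). Then for all c, u ∈ [−r,r], the quantity D = a − c − u satisfies 0 < D ≤ r², and the set {z ∈ [−r,r] : u = a − z² − c} consists of exactly two points, namely z = √D and z = −√D, with 0 < √D ≤ r. -/
/-!
The fiber equation `u = a - z² - c` reads `z² = D` with `D = a - c - u`, and `D` ranges over
`[a - 2r, a + 2r]` as `c` and `u` range over `[-r, r]`. Since `r` is the positive root of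
`r² = a + 2r`, the right end is exactly `r²`, so that `√D ≤ r`; the left end is positive exactly
when `a > 8`, and `5 + 2√5 > 8`.
-/

open Set

theorem sep_Icc_sq_eq_pair_sqrt {d r : ℝ} (hd : 0 ≤ d) (hdr : √d ≤ r) :
    {z ∈ Icc (-r) r | z ^ 2 = d} = {√d, -√d} := by
  ext z
  have sq_eq_iff : z ^ 2 = d ↔ z = √d ∨ z = -√d := by
    rw [← sq_eq_sq_iff_eq_or_eq_neg, Real.sq_sqrt hd]
  have mem_Icc_of_sq_eq (hz : z ^ 2 = d) : z ∈ Icc (-r) r :=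
    abs_le.mp (by rwa [← Real.sqrt_sq_eq_abs, hz])
  exact (and_iff_right_of_imp mem_Icc_of_sq_eq).trans sq_eq_iff

theorem one_add_sqrt_one_add_sq {a : ℝ} (ha : -1 ≤ a) :
    (1 + √(1 + a)) ^ 2 = a + 2 * (1 + √(1 + a)) := by
  rw [add_sq, Real.sq_sqrt (by linarith)]
  ring

theorem two_mul_one_add_sqrt_one_add_lt_iff {a : ℝ} : 2 * (1 + √(1 + a)) < a ↔ 8 < a := by
  rcases le_or_gt a 2 with ha | ha
  · have := Real.sqrt_nonneg (1 + a)
    constructor <;> intro <;> linarith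
  · calc 2 * (1 + √(1 + a)) < a ↔ √(1 + a) < a / 2 - 1 := by constructor <;> intro <;> linarith
      _ ↔ 1 + a < (a / 2 - 1) ^ 2 := Real.sqrt_lt' (by linarith)
      _ ↔ a * 8 < a * a := by constructor <;> intro <;> linarith
      _ ↔ 8 < a := mul_lt_mul_iff_right₀ (by linarith)

theorem stmt_17_general {a r : ℝ} (ha : 8 < a) (hr : r = 1 + √(1 + a)) :
    ∀ c ∈ Icc (-r) r, ∀ u ∈ Icc (-r) r,
      0 < a - c - u ∧ a - c - u ≤ r ^ 2 ∧
      {z ∈ Icc (-r) r | u = a - z ^ 2 - c} = {√(a - c - u), -√(a - c - u)} ∧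
      0 < √(a - c - u) ∧ √(a - c - u) ≤ r := by
  intro c hc u hu
  have two_mul_lt : 2 * r < a := hr ▸ two_mul_one_add_sqrt_one_add_lt_iff.mpr ha
  have r_sq : r ^ 2 = a + 2 * r := hr ▸ one_add_sqrt_one_add_sq (by linarith)
  have r_nonneg : 0 ≤ r := hr ▸ by positivity
  have D_pos : 0 < a - c - u := by linarith [hc.2, hu.2]
  have D_le : a - c - u ≤ r ^ 2 := by linarith [hc.1, hu.1]
  have sqrt_le : √(a - c - u) ≤ r := Real.sqrt_le_iff.mpr ⟨r_nonneg, D_le⟩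
  have fiber_iff (z : ℝ) : u = a - z ^ 2 - c ↔ z ^ 2 = a - c - u := by
    constructor <;> intro <;> linarith
  simp only [fiber_iff]
  exact ⟨D_pos, D_le, sep_Icc_sq_eq_pair_sqrt D_pos.le sqrt_le, Real.sqrt_pos.mpr D_pos, sqrt_le⟩

/-- the Devaney–Nitecki fiber property: for `c, u ∈ [-r,r]` the
set `{z ∈ [-r,r] : u = a - z² - c}` consists of exactly the two points `±√D`,
`D = a - c - u`. -/
theorem stmt_17 (a : ℝ) (ha : a > 5 + 2 * Real.sqrt 5)
    (r : ℝ) (hr : r = 1 + Real.sqrt (1 + a)) :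
    ∀ c ∈ Set.Icc (-r) r, ∀ u ∈ Set.Icc (-r) r,
      0 < a - c - u ∧ a - c - u ≤ r ^ 2 ∧
      {z ∈ Set.Icc (-r) r | u = a - z ^ 2 - c} =
        {Real.sqrt (a - c - u), -Real.sqrt (a - c - u)} ∧
      0 < Real.sqrt (a - c - u) ∧ Real.sqrt (a - c - u) ≤ r := by
  have three_halves_lt_sqrt_five : 3 / 2 < √(5 : ℝ) := Real.lt_sqrt_of_sq_lt (by norm_num)
  exact stmt_17_general (by linarith) hr
end

section
/- Let a > 5 + 2√5, r = 1 + √(1+a), let f_II : ℝ³ → ℝ³ be the bijection f_II(x,y,z) = (a − x² − z, a − y² − x, y), and let R = [−r,r]³. Then there exists a nonempty compact set Λ ⊆ ⋂_{n ∈ ℤ} f_II^n(R) with f_II(Λ) = Λ, together with a continuous surjection π : Λ → ({1,2,3,4})^ℤ (the full shift space on 4 symbols with the product topology) satisfying π(f_II(x)) = σ(π(x)) for all x ∈ Λ, where σ is the left shift σ(ω)(k) = ω(k+1). -/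
/-- The three-dimensional Hénon-type map `f_II` (with `a₀ = a₁ = a`). -/
def fII (a₀ a₁ : ℝ) : ℝ × ℝ × ℝ → ℝ × ℝ × ℝ :=
  fun p => (a₀ - p.1 ^ 2 - p.2.2, a₁ - p.2.1 ^ 2 - p.1, p.2.1)

/-! `f_II` is the square of the quadratic fold `h (x, y, z) = (y, a - x² - z, x)`, whose orbits are
`(w k, w (k + 1), w (k - 1))` for the bi-infinite solutions of `w (k + 2) = a - w k² - w (k - 1)`.
Prescribing the sign `s k` of every `w k` turns this recurrence into the fixed point equation
`w k = s k * √(a - w (k + 2) - w (k - 1))` on sequences in `[-r, r]`, where `a = r² - 2r`. In the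
coordinate `w` its right-hand side is a contraction for `a > 5 + 2√5`; in the angular coordinate
`w = r sin θ` it is one for every `r > 4`, i.e. `a > 8`. So every sign pattern is realised by an
orbit, and since `a - 2r > 0` no orbit in the box meets a crease `w k = 0`, which makes the signs
continuous on the maximal invariant set. The symbols of `f_II` are the pairs of signs of `w (2 n)`
and `w (2 n + 1)`. -/

open Set
open scoped NNReal

section InvariantSet

variable {X α : Type*} [TopologicalSpace X] {h : X ≃ₜ X} {K : Set X} {p : X}

/-- The largest `h`-invariant subset of `K`, i.e. `⋂ n : ℤ, hⁿ(K)`, described by full orbits. -/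
def maximalInvariantSet (h : X ≃ₜ X) (K : Set X) : Set X :=
  {p | ∀ n : ℤ, (h ^ n) p ∈ K}

lemma maximalInvariantSet_subset (h : X ≃ₜ X) (K : Set X) : maximalInvariantSet h K ⊆ K :=
  fun _ hp => hp 0

lemma zpow_mem_maximalInvariantSet_iff (n : ℤ) :
    (h ^ n) p ∈ maximalInvariantSet h K ↔ p ∈ maximalInvariantSet h K := by
  refine ⟨fun hp k => ?_, fun hp k => ?_⟩
  · simpa only [← Homeomorph.mul_apply, ← zpow_add, sub_add_cancel] using hp (k - n)
  · rw [← Homeomorph.mul_apply, ← zpow_add]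
    exact hp (k + n)

lemma image_maximalInvariantSet (h : X ≃ₜ X) (K : Set X) :
    h '' maximalInvariantSet h K = maximalInvariantSet h K := by
  ext p
  rw [Homeomorph.image_eq_preimage_symm, mem_preimage, ← Homeomorph.inv_apply, ← zpow_neg_one,
    zpow_mem_maximalInvariantSet_iff]

lemma isCompact_maximalInvariantSet [T2Space X] (hK : IsCompact K) :
    IsCompact (maximalInvariantSet h K) := by
  refine hK.of_isClosed_subset ?_ (maximalInvariantSet_subset h K)
  simp only [maximalInvariantSet, ofPred_forall]
  exact isClosed_iInter fun n => hK.isClosed.preimage (h ^ n).continuous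

/-- The bi-infinite sequence of symbols `c` read off along the full orbit of a point. -/
def itinerary (h : X ≃ₜ X) (c : X → α) (p : X) : ℤ → α :=
  fun n => c ((h ^ n) p)

lemma itinerary_apply_map (h : X ≃ₜ X) (c : X → α) (p : X) :
    itinerary h c (h p) = fun k => itinerary h c p (k + 1) := by
  funext k
  rw [itinerary, itinerary, zpow_add_one, Homeomorph.mul_apply]

lemma continuousOn_itinerary [TopologicalSpace α] {c : X → α}
    (hc : ContinuousOn c (maximalInvariantSet h K)) :
    ContinuousOn (itinerary h c) (maximalInvariantSet h K) :=
  continuousOn_pi.2 fun n =>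
    hc.comp (h ^ n).continuous.continuousOn fun _ => (zpow_mem_maximalInvariantSet_iff n).2

lemma zpow_apply_of_orbit {x : ℤ → X} (hx : ∀ n, h (x n) = x (n + 1)) (n : ℤ) :
    (h ^ n) (x 0) = x n := by
  induction n using Int.induction_on with
  | zero => rfl
  | succ n ih => rw [add_comm, zpow_one_add, Homeomorph.mul_apply, ih, hx, add_comm]
  | pred n ih =>
    apply h.injective
    rw [hx, sub_add_cancel, ← Homeomorph.mul_apply, ← zpow_one_add, add_sub_cancel, ih]

end InvariantSet

lemma subset_image_iterate_of_image_eq {X : Type*} {f : X → X} {Λ K : Set X} (hΛ : f '' Λ = Λ)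
    (hK : Λ ⊆ K) (n : ℕ) : Λ ⊆ f^[n] '' K ∧ Λ ⊆ f^[n] ⁻¹' K := by
  have hn : f^[n] '' Λ = Λ := by rw [image_iterate_eq, Function.iterate_fixed hΛ]
  exact ⟨hn.symm.subset.trans (image_mono hK), image_subset_iff.1 (hn.subset.trans hK)⟩

theorem exists_fixedPoint_of_dist_apply_le {ι X : Type*} [MetricSpace X] [CompleteSpace X]
    [BoundedSpace X] [Nonempty X] {T : (ι → X) → ι → X} {c : ℝ≥0} (hc : c < 1)
    (hT : ∀ (u v : ι → X) (d : ℝ), (∀ i, dist (u i) (v i) ≤ d) →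
      ∀ i, dist (T u i) (T v i) ≤ c * d) :
    ∃ u, T u = u := by
  let : TopologicalSpace ι := ⊥
  have : DiscreteTopology ι := ⟨rfl⟩
  obtain ⟨D, hD⟩ := Metric.isBounded_iff.1 (Bornology.isBounded_univ.2 ‹BoundedSpace X›)
  let ofFun (u : ι → X) : BoundedContinuousFunction ι X :=
    .mkOfDiscrete u D fun i j => hD (mem_univ _) (mem_univ _)
  have hcontr : ContractingWith c fun u => ofFun (T u) :=
    ⟨hc, .of_dist_le_mul fun u v => (BoundedContinuousFunction.dist_le (by positivity)).2
      (hT u v _ BoundedContinuousFunction.dist_coe_le_dist)⟩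
  have : Nonempty (BoundedContinuousFunction ι X) := .map ofFun inferInstance
  exact ⟨hcontr.fixedPoint, congrArg DFunLike.coe hcontr.fixedPoint_isFixedPt⟩

section SignedSqrt

open Real

variable {a r p q : ℝ}

lemma sub_sub_mem_Icc (ha : a = r ^ 2 - 2 * r) (hp : p ∈ Icc (-r) r) (hq : q ∈ Icc (-r) r) :
    a - p - q ∈ Icc (r * (r - 4)) (r ^ 2) :=
  ⟨by linarith [hp.2, hq.2], by linarith [hp.1, hq.1]⟩

lemma sub_sub_pos (hr : 4 < r) (ha : a = r ^ 2 - 2 * r) (hp : p ∈ Icc (-r) r)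
    (hq : q ∈ Icc (-r) r) : 0 < a - p - q :=
  (mul_pos (by linarith) (by linarith)).trans_le (sub_sub_mem_Icc ha hp hq).1

-- With `p = r * sin θ`, this bounds the square of the derivative of
-- `θ ↦ arcsin (√(a - q - r * sin θ) / r)` by the square of `r / (4 * (r - 2))`.
lemma two_mul_sub_sq_mul_le (hr : 4 ≤ r) (ha : a = r ^ 2 - 2 * r) (hp : p ∈ Icc (-r) r)
    (hq : q ∈ Icc (-r) r) :
    (2 * (r - 2)) ^ 2 * (r ^ 2 - p ^ 2) ≤ r ^ 2 * ((a - q - p) * (r ^ 2 - (a - q - p))) := by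
  have hnonneg : 0 ≤ a - q - p :=
    (mul_nonneg (by linarith) (by linarith)).trans (sub_sub_mem_Icc ha hq hp).1
  obtain ⟨hp₁, hp₂⟩ := hp
  obtain ⟨hq₁, hq₂⟩ := hq
  have hrate : (2 * (r - 2)) ^ 2 ≤ r ^ 2 * ((r - 2) / 2) := by
    nlinarith [mul_nonneg (sq_nonneg (r - 4)) (by linarith : 0 ≤ r - 2)]
  have hfactor : (r - 2) / 2 * (r - p) ≤ a - q - p := by nlinarith
  calc (2 * (r - 2)) ^ 2 * (r ^ 2 - p ^ 2)
      ≤ r ^ 2 * ((r - 2) / 2) * (r ^ 2 - p ^ 2) :=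
        mul_le_mul_of_nonneg_right hrate (by nlinarith)
    _ = r ^ 2 * ((r - 2) / 2 * (r - p) * (r + p)) := by ring
    _ ≤ r ^ 2 * ((a - q - p) * (r ^ 2 - (a - q - p))) := by
        gcongr <;> linarith

lemma mul_sin_mem_Icc (hr : 0 ≤ r) (θ : ℝ) : r * sin θ ∈ Icc (-r) r :=
  ⟨by nlinarith [neg_one_le_sin θ], by nlinarith [sin_le_one θ]⟩

lemma hasDerivAt_arcsin_sqrt_sub_sin {c θ : ℝ} (hr : 0 < r) (hpos : 0 < c - r * sin θ)
    (hlt : c - r * sin θ < r ^ 2) :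
    HasDerivAt (fun θ => arcsin (√(c - r * sin θ) / r))
      (-(r * cos θ / (2 * √((c - r * sin θ) * (r ^ 2 - (c - r * sin θ)))))) θ := by
  have hsqrt : HasDerivAt (fun θ => √(c - r * sin θ) / r)
      (-(r * cos θ) / (2 * √(c - r * sin θ)) / r) θ :=
    (((hasDerivAt_sin θ).const_mul r).const_sub c).sqrt hpos.ne' |>.div_const r
  have hlt_one : √(c - r * sin θ) / r < 1 :=
    (div_lt_one hr).2 ((sqrt_lt' hr).2 hlt)
  have hgt : -1 < √(c - r * sin θ) / r := neg_one_lt_zero.trans_le (by positivity)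
  refine ((hasDerivAt_arcsin hgt.ne' hlt_one.ne).comp θ hsqrt).congr_deriv ?_
  have hcos : √(1 - (√(c - r * sin θ) / r) ^ 2) = √(r ^ 2 - (c - r * sin θ)) / r := by
    rw [div_pow, sq_sqrt hpos.le, one_sub_div (by positivity), sqrt_div' _ (sq_nonneg r),
      sqrt_sq hr.le]
  have : 0 < √(r ^ 2 - (c - r * sin θ)) := sqrt_pos.2 (by linarith)
  have : 0 < √(c - r * sin θ) := sqrt_pos.2 hpos
  rw [hcos, sqrt_mul hpos.le]
  field_simp

lemma lipschitzOnWith_arcsin_sqrt_sub_sin (hr : 4 ≤ r) (ha : a = r ^ 2 - 2 * r)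
    (hq : q ∈ Icc (-r) r) :
    LipschitzOnWith (r / (4 * (r - 2))).toNNReal
      (fun θ => arcsin (√(a - q - r * sin θ) / r)) (Icc (-(π / 2)) (π / 2)) := by
  have hr₀ : 0 < r := by linarith
  have hr₂ : 0 < r - 2 := by linarith
  -- Differentiability can fail at the end points, where the root may be `0` or `r`.
  rw [← closure_Ioo (by linarith [pi_pos] : -(π / 2) ≠ π / 2)]
  refine LipschitzOnWith.closure (by fun_prop) ?_
  refine (convex_Ioo _ _).lipschitzOnWith_of_nnnorm_hasDerivWithin_le
    (fun θ hθ => (hasDerivAt_arcsin_sqrt_sub_sin hr₀ ?_ ?_).hasDerivWithinAt)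
    fun θ hθ => NNReal.le_toNNReal_of_coe_le ?_
  · have hsin : sin θ < 1 := by
      simpa using sin_lt_sin_of_lt_of_le_pi_div_two hθ.1.le le_rfl hθ.2
    nlinarith [hq.2]
  · have hsin : -1 < sin θ := by
      simpa using sin_lt_sin_of_lt_of_le_pi_div_two le_rfl hθ.2.le hθ.1
    nlinarith [hq.1]
  set P := (a - q - r * sin θ) * (r ^ 2 - (a - q - r * sin θ))
  have hcos : 0 < cos θ := cos_pos_of_mem_Ioo hθ
  have hbound : (2 * (r - 2) * (r * cos θ)) ^ 2 ≤ r ^ 2 * P := by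
    convert two_mul_sub_sq_mul_le hr ha (mul_sin_mem_Icc hr₀.le θ) hq using 1
    rw [mul_pow, mul_pow r, mul_pow r, cos_sq']
    ring
  have hsqrt : 2 * (r - 2) * (r * cos θ) ≤ r * √P := by
    rw [← sqrt_sq hr₀.le, ← sqrt_mul (sq_nonneg r), sqrt_sq hr₀.le]
    exact le_sqrt_of_sq_le hbound
  have hlhs : 0 < 2 * (r - 2) * (r * cos θ) := by positivity
  have hP : 0 < √P := pos_of_mul_pos_right (hlhs.trans_le hsqrt) hr₀.le
  rw [coe_nnnorm, norm_neg, norm_of_nonneg (by positivity), div_le_div_iff₀ (by positivity)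
    (by positivity)]
  linarith

lemma abs_arcsin_sqrt_sub_le {d x x' y y' : ℝ} (hr : 4 ≤ r) (ha : a = r ^ 2 - 2 * r)
    (hx : x ∈ Icc (-(π / 2)) (π / 2)) (hx' : x' ∈ Icc (-(π / 2)) (π / 2))
    (hy : y ∈ Icc (-(π / 2)) (π / 2)) (hy' : y' ∈ Icc (-(π / 2)) (π / 2))
    (hxd : |x - x'| ≤ d) (hyd : |y - y'| ≤ d) :
    |arcsin (√(a - r * sin x - r * sin y) / r) - arcsin (√(a - r * sin x' - r * sin y') / r)| ≤
      r / (2 * (r - 2)) * d := by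
  have hr₀ : 0 ≤ r := by linarith
  have hrate : 0 ≤ r / (4 * (r - 2)) := div_nonneg hr₀ (by linarith)
  have hvary {q θ θ' : ℝ} (hq : q ∈ Icc (-r) r) (hθ : θ ∈ Icc (-(π / 2)) (π / 2))
      (hθ' : θ' ∈ Icc (-(π / 2)) (π / 2)) (hd : |θ - θ'| ≤ d) :
      |arcsin (√(a - q - r * sin θ) / r) - arcsin (√(a - q - r * sin θ') / r)| ≤
        r / (4 * (r - 2)) * d := by
    have hlip := (lipschitzOnWith_arcsin_sqrt_sub_sin hr ha hq).dist_le_mul θ hθ θ' hθ'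
    rw [dist_eq, dist_eq, coe_toNNReal _ hrate] at hlip
    exact hlip.trans (mul_le_mul_of_nonneg_left hd hrate)
  have hfst := hvary (mul_sin_mem_Icc hr₀ y) hx hx' hxd
  have hsnd := hvary (mul_sin_mem_Icc hr₀ x') hy hy' hyd
  rw [sub_right_comm a (r * sin y), sub_right_comm a (r * sin y)] at hfst
  calc _ ≤ r / (4 * (r - 2)) * d + r / (4 * (r - 2)) * d :=
        (abs_sub_le _ _ _).trans (add_le_add hfst hsnd)
    _ = r / (2 * (r - 2)) * d := by
        have : r - 2 ≠ 0 := by linarith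
        field_simp
        ring

lemma arcsin_mul_of_abs_eq_one {s : ℝ} (hs : |s| = 1) (x : ℝ) :
    arcsin (s * x) = s * arcsin x := by
  obtain rfl | rfl := eq_or_eq_neg_of_abs_eq hs <;> simp

lemma mul_sin_arcsin_div {x : ℝ} (hr : 0 < r) (hx : |x| ≤ r) : r * sin (arcsin (x / r)) = x := by
  obtain ⟨hx₁, hx₂⟩ := abs_le.1 hx
  rw [sin_arcsin ((le_div_iff₀ hr).2 (by linarith)) ((div_le_one hr).2 hx₂),
    mul_div_cancel₀ x hr.ne']

theorem exists_eq_mul_sqrt {ι : Type*} (hr : 4 < r) (ha : a = r ^ 2 - 2 * r)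
    (σ τ : ι → ι) {s : ι → ℝ} (hs : ∀ i, |s i| = 1) :
    ∃ w : ι → ℝ, (∀ i, w i ∈ Icc (-r) r) ∧ ∀ i, w i = s i * √(a - w (σ i) - w (τ i)) := by
  have hr₀ : 0 < r := by linarith
  have hrate : r / (2 * (r - 2)) < 1 := (div_lt_one (by linarith)).2 (by linarith)
  have : Nonempty (Icc (-(π / 2)) (π / 2)) := ⟨⟨0, by constructor <;> linarith [pi_pos]⟩⟩
  let root (u : ι → Icc (-(π / 2)) (π / 2)) (i : ι) : ℝ :=
    √(a - r * sin (u (σ i)) - r * sin (u (τ i)))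
  let T (u : ι → Icc (-(π / 2)) (π / 2)) (i : ι) : Icc (-(π / 2)) (π / 2) :=
    ⟨arcsin (s i * root u i / r), arcsin_mem_Icc _⟩
  obtain ⟨u, hu⟩ : ∃ u, T u = u := by
    refine exists_fixedPoint_of_dist_apply_le (toNNReal_lt_one.2 hrate) fun u v d hd i => ?_
    rw [coe_toNNReal _ (div_nonneg hr₀.le (by linarith)), Subtype.dist_eq, dist_eq]
    simp only [T, mul_div_assoc, arcsin_mul_of_abs_eq_one (hs i)]
    rw [← mul_sub, abs_mul, hs, one_mul]
    exact abs_arcsin_sqrt_sub_le hr.le ha (u _).2 (v _).2 (u _).2 (v _).2 (hd _) (hd _)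
  refine ⟨fun i => r * sin (u i), fun i => mul_sin_mem_Icc hr₀.le _, fun i => ?_⟩
  have hroot : |s i * root u i| ≤ r := by
    rw [abs_mul, hs, one_mul, abs_of_nonneg (sqrt_nonneg _), sqrt_le_left hr₀.le]
    exact (sub_sub_mem_Icc ha (mul_sin_mem_Icc hr₀.le _) (mul_sin_mem_Icc hr₀.le _)).2
  calc r * sin (u i) = r * sin (T u i) := by rw [hu]
    _ = s i * root u i := mul_sin_arcsin_div hr₀ hroot

end SignedSqrt

section QuadraticFold

variable {a r : ℝ}

theorem exists_recurrence_solution_decide_pos (hr : 4 < r) (ha : a = r ^ 2 - 2 * r)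
    (ε : ℤ → Bool) :
    ∃ w : ℤ → ℝ, (∀ k, w k ∈ Icc (-r) r) ∧ (∀ k, w (k + 2) = a - w k ^ 2 - w (k - 1)) ∧
      ∀ k, decide (0 < w k) = ε k := by
  let s (k : ℤ) : ℝ := if ε k then 1 else -1
  have hs (k : ℤ) : |s k| = 1 := by simp only [s]; split_ifs <;> simp
  obtain ⟨w, hw, heq⟩ := exists_eq_mul_sqrt hr ha (· + 2) (· - 1) hs
  have hpos (k : ℤ) : 0 < a - w (k + 2) - w (k - 1) := sub_sub_pos hr ha (hw _) (hw _)
  refine ⟨w, hw, fun k => ?_, fun k => ?_⟩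
  · have hsq : w k ^ 2 = a - w (k + 2) - w (k - 1) := by
      rw [heq k, mul_pow, Real.sq_sqrt (hpos k).le, ← sq_abs, hs, one_pow, one_mul]
    linarith
  · have hsqrt := Real.sqrt_pos.2 (hpos k)
    rw [heq k]
    cases hε : ε k <;> simp [s, hε, hsqrt, hsqrt.le]

/-- The fold whose square is `fII a a`; its crease is the plane `x = 0`. -/
def quadraticFold (a : ℝ) : (ℝ × ℝ × ℝ) ≃ₜ (ℝ × ℝ × ℝ) where
  toFun p := (p.2.1, a - p.1 ^ 2 - p.2.2, p.1)
  invFun p := (p.2.2, p.1, a - p.2.2 ^ 2 - p.2.1)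
  left_inv p := by simp
  right_inv p := by simp
  continuous_toFun := by fun_prop
  continuous_invFun := by fun_prop

lemma quadraticFold_apply (a x y z : ℝ) :
    quadraticFold a (x, y, z) = (y, a - x ^ 2 - z, x) := rfl

lemma coe_quadraticFold_sq (a : ℝ) : ⇑(quadraticFold a ^ 2) = fII a a := rfl

/-- The cube `R = [-r, r]³`. -/
def cube (r : ℝ) : Set (ℝ × ℝ × ℝ) :=
  Icc (-r) r ×ˢ Icc (-r) r ×ˢ Icc (-r) r

lemma isCompact_cube (r : ℝ) : IsCompact (cube r) :=
  isCompact_Icc.prod (isCompact_Icc.prod isCompact_Icc)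

/-- The symbol of a point: which of the four quadrants cut out by the creases `x = 0` and `y = 0`
contains it, points on a crease being counted as negative. -/
noncomputable def quadrant (p : ℝ × ℝ × ℝ) : Bool × Bool :=
  (decide (0 < p.1), decide (0 < p.2.1))

lemma continuousAt_decide_pos {x : ℝ} (hx : x ≠ 0) :
    ContinuousAt (fun y : ℝ => decide (0 < y)) x := by
  simp_rw [← sign_eq_one_iff]
  exact (continuous_of_discreteTopology (f := fun s : SignType => decide (s = 1))).continuousAt.comp
    (continuousAt_sign_of_ne_zero hx)

lemma ne_zero_of_mem_cube_of_fII_mem_cube (hr : 4 < r) (ha : a = r ^ 2 - 2 * r)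
    {p : ℝ × ℝ × ℝ} (hp : p ∈ cube r) (hfp : fII a a p ∈ cube r) : p.1 ≠ 0 ∧ p.2.1 ≠ 0 := by
  obtain ⟨hx, -, hz⟩ := hp
  obtain ⟨hx', hy', -⟩ := hfp
  have hsq_x := sub_sub_pos hr ha hx' hz
  have hsq_y := sub_sub_pos hr ha hy' hx
  simp only [fII] at hsq_x hsq_y
  exact ⟨fun h => by simp [h] at hsq_x, fun h => by simp [h] at hsq_y⟩

lemma continuousOn_quadrant (hr : 4 < r) (ha : a = r ^ 2 - 2 * r) :
    ContinuousOn quadrant (maximalInvariantSet (quadraticFold a ^ 2) (cube r)) := fun p hp => by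
  obtain ⟨hx, hy⟩ := ne_zero_of_mem_cube_of_fII_mem_cube hr ha (hp 0) (hp 1)
  have hcx : ContinuousAt (fun p : ℝ × ℝ × ℝ => decide (0 < p.1)) p :=
    (continuousAt_decide_pos hx).comp continuousAt_fst
  have hcy : ContinuousAt (fun p : ℝ × ℝ × ℝ => decide (0 < p.2.1)) p :=
    (continuousAt_decide_pos hy).comp (f := fun p : ℝ × ℝ × ℝ => p.2.1) (by fun_prop)
  exact (hcx.prodMk hcy).continuousWithinAt

lemma quadraticFold_zpow_apply {w : ℤ → ℝ} (hw : ∀ k, w (k + 2) = a - w k ^ 2 - w (k - 1))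
    (n : ℤ) : (quadraticFold a ^ n) (w 0, w 1, w (-1)) = (w n, w (n + 1), w (n - 1)) := by
  refine zpow_apply_of_orbit (x := fun k => (w k, w (k + 1), w (k - 1))) (fun k => ?_) n
  rw [quadraticFold_apply, ← hw, add_assoc, one_add_one_eq_two, add_sub_cancel_right]

theorem exists_itinerary_quadrant_eq (hr : 4 < r) (ha : a = r ^ 2 - 2 * r) (ω : ℤ → Bool × Bool) :
    ∃ p ∈ maximalInvariantSet (quadraticFold a ^ 2) (cube r),
      itinerary (quadraticFold a ^ 2) quadrant p = ω := by
  obtain ⟨w, hmem, hrec, hsign⟩ := exists_recurrence_solution_decide_pos hr ha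
    fun k => if Even k then (ω (k / 2)).1 else (ω (k / 2)).2
  have horbit (n : ℤ) : ((quadraticFold a ^ 2) ^ n) (w 0, w 1, w (-1)) =
      (w (2 * n), w (2 * n + 1), w (2 * n - 1)) := by
    rw [← quadraticFold_zpow_apply hrec, zpow_mul, zpow_ofNat]
  refine ⟨(w 0, w 1, w (-1)), fun n => ?_, funext fun n => ?_⟩
  · rw [horbit]
    exact ⟨hmem _, hmem _, hmem _⟩
  · have hdiv : (2 * n + 1) / 2 = n := by lia
    simp only [itinerary, horbit, quadrant, hsign]
    rw [if_pos (even_two_mul n), if_neg (Int.not_even_two_mul_add_one n), hdiv,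
      Int.mul_ediv_cancel_left n two_ne_zero]

end QuadraticFold

lemma four_lt_and_eq_of_eq_one_add_sqrt {a r : ℝ} (ha : 8 < a) (hr : r = 1 + √(1 + a)) :
    4 < r ∧ a = r ^ 2 - 2 * r := by
  have hlt : 3 < √(1 + a) := Real.lt_sqrt_of_sq_lt (by linarith)
  have hsq : √(1 + a) ^ 2 = 1 + a := Real.sq_sqrt (by linarith)
  subst hr
  exact ⟨by linarith, by linarith⟩

theorem stmt_18_general (a : ℝ) (ha : 8 < a)
    (r : ℝ) (hr : r = 1 + Real.sqrt (1 + a)) :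
    ∃ Λ : Set (ℝ × ℝ × ℝ),
      Λ.Nonempty ∧ IsCompact Λ ∧
      (∀ n : ℕ,
        Λ ⊆ (fII a a)^[n] ''
              (Set.Icc (-r) r ×ˢ Set.Icc (-r) r ×ˢ Set.Icc (-r) r) ∧
        Λ ⊆ (fII a a)^[n] ⁻¹'
              (Set.Icc (-r) r ×ˢ Set.Icc (-r) r ×ˢ Set.Icc (-r) r)) ∧
      fII a a '' Λ = Λ ∧
      ∃ π : (ℝ × ℝ × ℝ) → (ℤ → Fin 4),
        ContinuousOn π Λ ∧
        (∀ ω : ℤ → Fin 4, ∃ x ∈ Λ, π x = ω) ∧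
        (∀ x ∈ Λ, π (fII a a x) = fun k => π x (k + 1)) := by
  obtain ⟨hr₄, har⟩ := four_lt_and_eq_of_eq_one_add_sqrt ha hr
  let h := quadraticFold a ^ 2
  let Λ := maximalInvariantSet h (cube r)
  let e : Bool × Bool ≃ Fin 4 :=
    (finTwoEquiv.symm.prodCongr finTwoEquiv.symm).trans finProdFinEquiv
  have himage : fII a a '' Λ = Λ := by
    rw [← coe_quadraticFold_sq]
    exact image_maximalInvariantSet h (cube r)
  have hsurj (ω : ℤ → Fin 4) : ∃ p ∈ Λ, itinerary h (e ∘ quadrant) p = ω := by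
    obtain ⟨p, hp, hω⟩ := exists_itinerary_quadrant_eq hr₄ har (e.symm ∘ ω)
    exact ⟨p, hp, funext fun n => e.eq_symm_apply.1 (congrFun hω n)⟩
  obtain ⟨p, hp, -⟩ := hsurj 0
  exact ⟨Λ, ⟨p, hp⟩, isCompact_maximalInvariantSet (isCompact_cube r),
    subset_image_iterate_of_image_eq himage (maximalInvariantSet_subset h _), himage,
    itinerary h (e ∘ quadrant),
    continuousOn_itinerary
      (continuous_of_discreteTopology.comp_continuousOn (continuousOn_quadrant hr₄ har)),
    hsurj, fun p _ => itinerary_apply_map h _ p⟩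

/-- a semi-conjugacy of `f_II` restricted to a nonempty compact
invariant set `Λ ⊆ ⋂_{n ∈ ℤ} f_II^n(R)`, `R = [-r,r]³`, onto the full shift on
four symbols. -/
theorem stmt_18 (a : ℝ) (ha : a > 5 + 2 * Real.sqrt 5)
    (r : ℝ) (hr : r = 1 + Real.sqrt (1 + a)) :
    ∃ Λ : Set (ℝ × ℝ × ℝ),
      Λ.Nonempty ∧ IsCompact Λ ∧
      (∀ n : ℕ,
        Λ ⊆ (fII a a)^[n] ''
              (Set.Icc (-r) r ×ˢ Set.Icc (-r) r ×ˢ Set.Icc (-r) r) ∧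
        Λ ⊆ (fII a a)^[n] ⁻¹'
              (Set.Icc (-r) r ×ˢ Set.Icc (-r) r ×ˢ Set.Icc (-r) r)) ∧
      fII a a '' Λ = Λ ∧
      ∃ π : (ℝ × ℝ × ℝ) → (ℤ → Fin 4),
        ContinuousOn π Λ ∧
        (∀ ω : ℤ → Fin 4, ∃ x ∈ Λ, π x = ω) ∧
        (∀ x ∈ Λ, π (fII a a x) = fun k => π x (k + 1)) :=
  stmt_18_general a (by linarith [Real.lt_sqrt_of_sq_lt (show (2 : ℝ) ^ 2 < 5 by norm_num)]) r hr
end
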